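/- Assume x, x' ∈ G_n with tx(B_{G_n}(x,R)) = 0 and tx(B_{G_n}(x',R)) = 0 satisfy B_{G_n}(x,R) ∩ B_{G_n}(x',R) = ∅ for some R ≥ 1, and let U ⊆ B_{G_n}(x,R−1) ∪ B_{G_n}(x',R−1). Then there exists a coupling of the zero-average Gaussian free field Ψ_{G_n} and the Gaussian free field φ_{T_d} under which, almost surely, Ψ_{G_n}(y) − E_y^{G_n}[ Ψ_{G_n}(X_{T_U}) ] = φ_{T_d}(ρ_{x,x',R}(y)) − E_{ρ_{x,x',R}(y)}^{T_d}[ φ_{T_d}(X_{T_{ρ_{x,x',R}(U)}}) ] for all y ∈ B_{G_n}(x,R) ∪ B_{G_n}(x',R). Similarly, for a single x ∈ G_n with tx(B_{G_n}(x,R)) = 0 and U ⊆ B_{G_n}(x,R−1), the identity holds for all y ∈ B_{G_n}(x,R) with ρ_{x,x',R} replaced by ρ_{x,R}. -/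

import Mathlib

open MeasureTheory ProbabilityTheory Filter Set
open scoped ENNReal NNReal ENat Classical

namespace GFF

variable {V : Type*} {T : Type*}

/-- Number of ordered adjacent pairs inside `U` (twice the number of edges of the induced
subgraph). -/
noncomputable def adjPairs (G : SimpleGraph V) (U : Set V) : ℕ :=
  Set.ncard {p : V × V | p.1 ∈ U ∧ p.2 ∈ U ∧ G.Adj p.1 p.2}

/-- `U` (assumed connected) induces a tree, i.e. has tree excess zero. -/
def TxZero (G : SimpleGraph V) (U : Set V) : Prop :=
  adjPairs G U = 2 * (Set.ncard U - 1)

/-- Closed ball of radius `R` for the graph distance. -/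
def gball (G : SimpleGraph V) (x : V) (R : ℕ) : Set V := {y | G.dist x y ≤ R}

/-- Set of vertices within distance `R` of the set `A`. -/
def sball (G : SimpleGraph V) (A : Set V) (R : ℕ) : Set V := {y | ∃ a ∈ A, G.dist a y ≤ R}

/-- Connected component containing `x` of the level set `{ω ≥ h}`. -/
def levelComp (G : SimpleGraph V) (h : ℝ) (ω : V → ℝ) (x : V) : Set V :=
  {y | ∃ p : G.Walk x y, ∀ v ∈ p.support, h ≤ ω v}

/-- `G` is `d`-regular. -/
def IsReg (G : SimpleGraph V) (d : ℕ) : Prop := ∀ v, Nat.card (G.neighborSet v) = d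

/-- `G` is an infinite `d`-regular tree. -/
def IsRegTree (G : SimpleGraph V) (d : ℕ) : Prop :=
  G.Connected ∧ G.IsAcyclic ∧ IsReg G d

/-- Transition matrix of SRW on a `d`-regular graph. -/
noncomputable def transP [Fintype V] (G : SimpleGraph V) (d : ℕ) : Matrix V V ℝ :=
  Matrix.of fun u v => if G.Adj u v then ((d : ℝ))⁻¹ else 0

/-- All non-zero eigenvalues of `I - P` are at least `β`. -/
def SpectralGapLB [Fintype V] (G : SimpleGraph V) (d : ℕ) (β : ℝ) : Prop :=
  ∀ (f : V → ℝ) (lam : ℝ),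
    Matrix.mulVec ((1 : Matrix V V ℝ) - transP G d) f = lam • f → f ≠ 0 → lam = 0 ∨ β ≤ lam

/-- `P_x[X̄_t = y]` for the continuous-time SRW with i.i.d. mean-one exponential holding
times (Poissonized jump chain). -/
noncomputable def heatK [Fintype V] (G : SimpleGraph V) (d : ℕ) (t : ℝ) (x y : V) : ℝ :=
  ∑' k : ℕ, Real.exp (-t) * t ^ k / (Nat.factorial k) * ((transP G d) ^ k) x y

/-- The zero-average Green function. -/
noncomputable def zGreen [Fintype V] (G : SimpleGraph V) (d Nn : ℕ) (x y : V) : ℝ :=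
  ∫ t in Set.Ioi (0 : ℝ), (heatK G d t x y - 1 / (Nn : ℝ))

/-- Green function of SRW on the `d`-regular tree. -/
noncomputable def treeGreen (G : SimpleGraph V) (d : ℕ) (x y : V) : ℝ :=
  (((d : ℝ) - 1) / ((d : ℝ) - 2)) * (((d : ℝ) - 1)⁻¹) ^ (G.dist x y)

/-- `μ` is the law of the centred Gaussian field with covariance `K`. -/
def IsGaussianField {I : Type*} (μ : Measure (I → ℝ)) (K : I → I → ℝ) : Prop :=
  IsProbabilityMeasure μ ∧
    ∀ c : I →₀ ℝ,
      μ.map (fun ω => ∑ i ∈ c.support, c i * ω i) =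
        gaussianReal 0 (Real.toNNReal (∑ i ∈ c.support, ∑ j ∈ c.support, c i * c j * K i j))

/-- One-step transition probability of SRW. -/
noncomputable def srwStep (G : SimpleGraph V) (d : ℕ) (u v : V) : ℝ≥0∞ :=
  if G.Adj u v then (d : ℝ≥0∞)⁻¹ else 0

/-- `W x` is the law of discrete-time SRW on `G` started at `x`. -/
def IsSRW [MeasurableSpace V] (G : SimpleGraph V) (d : ℕ) (W : V → Measure (ℕ → V)) : Prop :=
  (∀ x, IsProbabilityMeasure (W x)) ∧
    ∀ (x : V) (k : ℕ) (p : ℕ → V),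
      W x {ω | ∀ i ≤ k, ω i = p i} =
        (if p 0 = x then 1 else 0) * ∏ i ∈ Finset.range k, srwStep G d (p i) (p (i + 1))

/-- Entrance time of the set `A` (`⊤` if never entered). -/
noncomputable def hitTime (A : Set V) (ω : ℕ → V) : ℕ∞ :=
  sInf ((Nat.cast : ℕ → ℕ∞) '' {k | ω k ∈ A})

/-- Exit time of the set `U`. -/
noncomputable def exitTime (U : Set V) (ω : ℕ → V) : ℕ∞ := hitTime Uᶜ ω

/-- Position of the walk at the entrance time of `A`. -/
noncomputable def stopAt (A : Set V) (ω : ℕ → V) : V := ω (hitTime A ω).toNat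

/-- `π` is a cover tree of `G` at `x`. -/
def IsCoverMap (Gt : SimpleGraph T) (G : SimpleGraph V) (o : T) (x : V) (π : T → V) : Prop :=
  π o = x ∧ Function.Surjective π ∧ ∀ y : T, π '' (Gt.neighborSet y) = G.neighborSet (π y)

/-- `T_d^+`: the vertices of the tree whose geodesic to `o` avoids the fixed neighbour
`obar` of `o`. -/
def treePlus (Gt : SimpleGraph T) (o obar : T) : Set T :=
  {z | Gt.dist z obar = Gt.dist z o + 1}

/-- `S^+_{T_d}(o,R)`. -/
def spherePlus (Gt : SimpleGraph T) (o obar : T) (R : ℕ) : Set T :=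
  {z | z ∈ treePlus Gt o obar ∧ Gt.dist o z = R}

/-- The critical value for level-set percolation on the tree (w.r.t. the law `μT`). -/
noncomputable def hstar (Gt : SimpleGraph T) (o : T) (μT : Measure (T → ℝ)) : ℝ :=
  sInf {h : ℝ | μT {ω | (levelComp Gt h ω o).Infinite} = 0}

/-- The forward percolation probability `η⁺(h)`. -/
noncomputable def etaPlus (Gt : SimpleGraph T) (o obar : T) (μT : Measure (T → ℝ)) (h : ℝ) :
    ℝ :=
  (μT {ω | (levelComp Gt h ω o ∩ treePlus Gt o obar).Infinite}).toReal

/-- `s_n`. -/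
noncomputable def sn (d Nn : ℕ) : ℕ :=
  max 1 ⌊(8 : ℝ) * Real.logb ((d : ℝ) - 1) (Real.logb ((d : ℝ) - 1) (Nn : ℝ))⌋₊

/-- `c₀ = αβ/(d-1)`. -/
noncomputable def c0 (d : ℕ) (α β : ℝ) : ℝ := α * β / ((d : ℝ) - 1)

/-- `r_n`. -/
noncomputable def rn (d : ℕ) (α β : ℝ) (Nn : ℕ) : ℕ :=
  max 1 ⌊(c0 d α β / 18) * Real.logb ((d : ℝ) - 1) (Nn : ℝ)⌋₊

/-- `R_n`. -/
noncomputable def Rn (d : ℕ) (α β : ℝ) (Nn : ℕ) : ℕ :=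
  max 1 ⌊(c0 d α β / 6) * Real.logb ((d : ℝ) - 1) (Nn : ℝ)⌋₊

/-- `F_A(x,s)`: the vertices of `B(A,s) ∖ A` connected to `x` within `B(A,s) ∖ A`. -/
def Fset (G : SimpleGraph V) (A : Set V) (s : ℕ) (x : V) : Set V :=
  {z | ∃ p : G.Walk x z, ∀ v ∈ p.support, v ∈ sball G A s ∧ v ∉ A}

/-- Good vertex at the boundary of `A`. -/
def GoodVertex (G : SimpleGraph V) (A : Set V) (s : ℕ) (x : V) : Prop :=
  x ∉ A ∧ (∃! y, y ∈ A ∧ G.Adj x y) ∧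
    TxZero G (Fset G A s x) ∧
    ∀ y : V, y ∉ A → (∃ a ∈ A, G.Adj y a) → y ≠ x →
      ∀ p : G.Walk y x, (∀ v ∈ p.support, v ∉ A) → ∃ v ∈ p.support, v ∉ sball G A s

end GFF

/-!
Let `L = I - P` be the probabilistic Laplacian. The zero-average Green function `K` of `G` satisfies
`L K = δ - 1/N`, and the Green function of the tree satisfies `L K = δ`. As `L` kills constants, in
both cases the covariance of `L` applied to the field is a local quantity, namely the matrix of `L`
itself. Hence `LΨ` on `U` and `Lφ` on the image of `U` have the same Gaussian law, and the fields
can be coupled so that these two coincide. A field minus its harmonic extension vanishes off `U` and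
has the same Laplacian on `U` as the field, so by the maximum principle it is a function of that
Laplacian.
-/

namespace GFF

section Graph

variable {V : Type*} {G : SimpleGraph V} {d : ℕ}

theorem eq_univ_of_forall_adj_mem (hc : G.Connected) {s : Set V} (hne : s.Nonempty)
    (hs : ∀ a ∈ s, ∀ b, G.Adj a b → b ∈ s) : s = univ := by
  obtain ⟨a, ha⟩ := hne
  refine eq_univ_of_forall fun b ↦ ?_
  induction (SimpleGraph.reachable_iff_reflTransGen a b).1 (hc a b) with
  | refl => exact ha
  | tail _ hadj ih => exact hs _ ih _ hadj

theorem countable_of_connected [G.LocallyFinite] (hc : G.Connected) : Countable V := by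
  obtain ⟨o⟩ := hc.nonempty
  let sphere : ℕ → Set V := fun n ↦ (fun s ↦ ⋃ z ∈ s, G.neighborSet z)^[n] {o}
  have sphere_succ (n : ℕ) : sphere (n + 1) = ⋃ z ∈ sphere n, G.neighborSet z :=
    Function.iterate_succ_apply' _ n _
  have hcount (n : ℕ) : (sphere n).Countable := by
    induction n with
    | zero => exact countable_singleton o
    | succ n ih =>
      rw [sphere_succ]
      exact ih.biUnion fun z _ ↦ (G.neighborSet z).toFinite.countable
  have huniv : ⋃ n, sphere n = univ := by
    refine eq_univ_of_forall_adj_mem hc ⟨o, mem_iUnion.2 ⟨0, rfl⟩⟩ fun a ha b hab ↦ ?_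
    obtain ⟨n, hn⟩ := mem_iUnion.1 ha
    exact mem_iUnion.2 ⟨n + 1, sphere_succ n ▸ mem_biUnion hn hab⟩
  exact countable_univ_iff.1 (huniv ▸ countable_iUnion hcount)

theorem infinite_of_isTree [G.LocallyFinite] (hG : G.IsTree) (hreg : G.IsRegularOfDegree d)
    (hd : 2 ≤ d) : Infinite V := by
  by_contra hfin
  have : Finite V := not_infinite_iff_finite.1 hfin
  obtain ⟨o⟩ := hG.connected.nonempty
  obtain ⟨v, hv⟩ := (G.degree_pos_iff_exists_adj o).1 (by rw [hreg o]; omega)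
  have : Nontrivial V := ⟨o, v, hv.ne⟩
  obtain ⟨w, -, -, hw, -⟩ := hG.exists_ne_and_degree_eq_one
  rw [hreg w] at hw
  omega

theorem IsReg.finite_neighborSet (h : IsReg G d) (hd : d ≠ 0) (v : V) : (G.neighborSet v).Finite :=
  Nat.finite_of_card_ne_zero (by rwa [h v])

theorem IsReg.isRegularOfDegree [G.LocallyFinite] (h : IsReg G d) : G.IsRegularOfDegree d :=
  fun v ↦ by rw [← G.card_neighborSet_eq_degree, ← Nat.card_eq_fintype_card, h v]

theorem exists_adj_dist_add_one_eq (hG : G.IsTree) {x y : V} (hxy : x ≠ y) :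
    ∃ w, G.Adj y w ∧ G.dist x w + 1 = G.dist x y ∧
      ∀ z, G.Adj y z → z ≠ w → G.dist x z = G.dist x y + 1 := by
  obtain ⟨p, hp⟩ := hG.connected.exists_walk_length_eq_dist y x
  cases p with
  | nil => exact absurd rfl hxy
  | @cons _ w _ hyw q =>
    rw [G.dist_comm, SimpleGraph.Walk.length_cons] at hp
    have hq : G.dist x w ≤ q.length := G.dist_comm (u := x) ▸ SimpleGraph.dist_le q
    refine ⟨w, hyw, ?_, fun z hyz hzw ↦ ?_⟩
    · have := hG.dist_eq_dist_add_one_of_adj x hyw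
      omega
    · refine (hG.dist_eq_dist_add_one_of_adj x hyz).resolve_left fun hcloser ↦ hzw ?_
      obtain ⟨r, hr⟩ := hG.connected.exists_walk_length_eq_dist z x
      rw [G.dist_comm] at hr
      have hpath_w : (SimpleGraph.Walk.cons hyw q).IsPath :=
        SimpleGraph.Walk.isPath_of_length_eq_dist _ (by rw [G.dist_comm]; simpa using hp)
      have hpath_z : (SimpleGraph.Walk.cons hyz r).IsPath :=
        SimpleGraph.Walk.isPath_of_length_eq_dist _ (by
          rw [G.dist_comm, SimpleGraph.Walk.length_cons]; omega)
      have hpaths := (hG.existsUnique_path y x).unique hpath_z hpath_w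
      simpa using congrArg SimpleGraph.Walk.snd hpaths

end Graph

section Laplacian

variable {V : Type*} {G : SimpleGraph V} [G.LocallyFinite]

/-- The probabilistic Laplacian `I - P`, where `P` averages a function over the neighbours of a
vertex. -/
noncomputable def laplacian (G : SimpleGraph V) [G.LocallyFinite] : (V → ℝ) →ₗ[ℝ] V → ℝ :=
  LinearMap.pi fun x ↦
    LinearMap.proj x - (G.degree x : ℝ)⁻¹ • ∑ y ∈ G.neighborFinset x, LinearMap.proj y

theorem laplacian_apply (f : V → ℝ) (x : V) :
    laplacian G f x = f x - (G.degree x : ℝ)⁻¹ * ∑ y ∈ G.neighborFinset x, f y := by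
  simp [laplacian]

theorem laplacian_const {x : V} (hx : G.degree x ≠ 0) (c : ℝ) :
    laplacian G (Function.const V c) x = 0 := by
  simp [laplacian_apply, hx]

theorem laplacian_congr {f g : V → ℝ} {x : V} (hx : f x = g x) (h : ∀ y, G.Adj x y → f y = g y) :
    laplacian G f x = laplacian G g x := by
  rw [laplacian_apply, laplacian_apply, hx,
    Finset.sum_congr rfl fun y hy ↦ h y ((G.mem_neighborFinset x y).1 hy)]

/-- `K` is a Green kernel of the Laplacian, up to the constant `κ` that a zero-average
normalization produces. -/
def IsGreenKernel (G : SimpleGraph V) [G.LocallyFinite] (K : V → V → ℝ) (κ : ℝ) : Prop :=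
  ∀ x, laplacian G (K x) = Pi.single x 1 - Function.const V κ

theorem nonpos_of_laplacian_nonpos (hc : G.Connected) {S : Set V} (hS : S.Finite) (hSu : S ≠ univ)
    {e : V → ℝ} (hoff : ∀ y ∉ S, e y ≤ 0) (hon : ∀ y ∈ S, laplacian G e y ≤ 0) (y : V) :
    e y ≤ 0 := by
  by_contra! hy
  have mem_of_pos {v : V} (hv : 0 < e v) : v ∈ S := by
    by_contra hvS
    exact (hoff v hvS).not_gt hv
  obtain ⟨m, -, hm⟩ := exists_max_image S e hS ⟨y, mem_of_pos hy⟩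
  have hm_pos : 0 < e m := hy.trans_le (hm y (mem_of_pos hy))
  have hmax (v : V) : e v ≤ e m := by
    by_cases hv : v ∈ S
    · exact hm v hv
    · exact (hoff v hv).trans hm_pos.le
  have hclosed : ∀ v ∈ {v | e v = e m}, ∀ w, G.Adj v w → w ∈ {v | e v = e m} := by
    intro v (hv : e v = e m) w hvw
    by_contra hw
    have hlt : e w < e m := (hmax w).lt_of_ne hw
    have hsum : ∑ u ∈ G.neighborFinset v, e u < G.degree v * e m := by
      rw [← nsmul_eq_mul, ← G.card_neighborFinset_eq_degree, ← Finset.sum_const]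
      exact Finset.sum_lt_sum (fun u _ ↦ hmax u) ⟨w, (G.mem_neighborFinset v w).2 hvw, hlt⟩
    have hdeg : (0 : ℝ) < G.degree v := by
      exact_mod_cast (G.degree_pos_iff_exists_adj v).2 ⟨w, hvw⟩
    have hlap := hon v (mem_of_pos (hv ▸ hm_pos))
    rw [laplacian_apply, hv, sub_nonpos, ← div_eq_inv_mul, le_div_iff₀ hdeg, mul_comm] at hlap
    exact hsum.not_ge hlap
  obtain ⟨z, hz⟩ := (ne_univ_iff_exists_notMem S).1 hSu
  have huniv : {v | e v = e m} = univ := eq_univ_of_forall_adj_mem hc ⟨m, rfl⟩ hclosed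
  have hz_max : e z = e m := eq_univ_iff_forall.1 huniv z
  exact (hoff z hz).not_gt (hz_max ▸ hm_pos)

theorem eq_zero_of_laplacian_eq_zero (hc : G.Connected) {S : Set V} (hS : S.Finite)
    (hSu : S ≠ univ) {e : V → ℝ} (hoff : ∀ y ∉ S, e y = 0) (hon : ∀ y ∈ S, laplacian G e y = 0) :
    e = 0 := by
  funext y
  refine le_antisymm
    (nonpos_of_laplacian_nonpos hc hS hSu (fun y hy ↦ (hoff y hy).le) (fun y hy ↦ (hon y hy).le) y)
    (neg_nonpos.1
      (nonpos_of_laplacian_nonpos (e := -e) hc hS hSu (fun y hy ↦ ?_) (fun y hy ↦ ?_) y))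
  · simp [hoff y hy]
  · simp [hon y hy]

end Laplacian

section TreeGreen

variable {V : Type*} {G : SimpleGraph V} [G.LocallyFinite] {d : ℕ}

theorem isGreenKernel_treeGreen (hG : G.IsTree) (hreg : G.IsRegularOfDegree d) (hd : 3 ≤ d) :
    IsGreenKernel G (treeGreen G d) 0 := by
  have hd3 : (3 : ℝ) ≤ d := by exact_mod_cast hd
  have hd0 : (d : ℝ) ≠ 0 := by linarith
  have hd1 : (d : ℝ) - 1 ≠ 0 := by linarith
  have hd2 : (d : ℝ) - 2 ≠ 0 := by linarith
  intro x
  funext y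
  rw [laplacian_apply, hreg y]
  obtain rfl | hxy := eq_or_ne x y
  · have hnbr : ∀ z ∈ G.neighborFinset x, treeGreen G d x z = 1 / ((d : ℝ) - 2) := by
      intro z hz
      have hdist : G.dist x z = 1 := SimpleGraph.dist_eq_one_iff_adj.2 (by simpa using hz)
      rw [treeGreen, hdist]
      field_simp
    rw [Finset.sum_congr rfl hnbr, Finset.sum_const, G.card_neighborFinset_eq_degree, hreg x]
    simp only [treeGreen, SimpleGraph.dist_self, pow_zero, nsmul_eq_mul, Pi.sub_apply,
      Pi.single_eq_same, Function.const_apply]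
    field_simp
    ring
  · obtain ⟨w, hyw, hw, hfar⟩ := exists_adj_dist_add_one_eq hG hxy
    have hnbr : ∀ z ∈ (G.neighborFinset y).erase w, treeGreen G d x z =
        ((d : ℝ) - 1) / ((d : ℝ) - 2) * ((d : ℝ) - 1)⁻¹ ^ (G.dist x w + 2) := by
      intro z hz
      rw [Finset.mem_erase, G.mem_neighborFinset] at hz
      rw [treeGreen, hfar z hz.2 hz.1, ← hw]
    have hw_mem : w ∈ G.neighborFinset y := (G.mem_neighborFinset y w).2 hyw
    rw [← Finset.add_sum_erase _ _ hw_mem, Finset.sum_congr rfl hnbr, Finset.sum_const,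
      Finset.card_erase_of_mem hw_mem, G.card_neighborFinset_eq_degree, hreg y, nsmul_eq_mul,
      Nat.cast_sub (by omega), treeGreen, treeGreen, ← hw, pow_add, pow_add]
    simp only [Pi.sub_apply, Pi.single_eq_of_ne' hxy, Function.const_apply]
    push_cast
    field_simp
    ring

end TreeGreen

section Spectral

variable {V : Type*} [Fintype V] {G : SimpleGraph V} {d : ℕ}

theorem laplacian_eq_lapMatrix_mulVec (hreg : G.IsRegularOfDegree d) (hd : d ≠ 0) (f : V → ℝ) :
    laplacian G f = (d : ℝ)⁻¹ • (G.lapMatrix ℝ).mulVec f := by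
  have : (d : ℝ) ≠ 0 := Nat.cast_ne_zero.2 hd
  funext x
  rw [laplacian_apply, Pi.smul_apply, SimpleGraph.lapMatrix_mulVec_apply, hreg x, smul_eq_mul]
  field_simp

theorem sum_laplacian (hreg : G.IsRegularOfDegree d) (hd : d ≠ 0) (f : V → ℝ) :
    ∑ x, laplacian G f x = 0 := by
  have hsum : ∑ x, (G.lapMatrix ℝ).mulVec f x = 0 := by
    have := Matrix.dotProduct_mulVec (fun _ ↦ 1) (G.lapMatrix ℝ) f
    rwa [← Matrix.mulVec_transpose, (G.isSymm_lapMatrix (R := ℝ)).eq,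
      G.lapMatrix_mulVec_const_eq_zero, zero_dotProduct, dotProduct,
      Finset.sum_congr rfl fun x _ ↦ one_mul _] at this
  simp only [laplacian_eq_lapMatrix_mulVec hreg hd, Pi.smul_apply, ← Finset.smul_sum, hsum,
    smul_zero]

/-- An orthonormal eigenbasis of the Laplacian of a finite graph. -/
noncomputable def eigenvec (G : SimpleGraph V) (i : V) : V → ℝ :=
  (G.posSemidef_lapMatrix ℝ).isHermitian.eigenvectorBasis i

/-- The eigenvalue of the probabilistic Laplacian `I - P` of a `d`-regular graph that belongs to
`eigenvec G i`. -/
noncomputable def eigenval (G : SimpleGraph V) (d : ℕ) (i : V) : ℝ :=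
  (d : ℝ)⁻¹ * (G.posSemidef_lapMatrix ℝ).isHermitian.eigenvalues i

theorem sum_eigenvec_mul_eigenvec (x y : V) :
    ∑ i, eigenvec G i x * eigenvec G i y = (1 : Matrix V V ℝ) x y := by
  have h := congrFun₂ (Unitary.coe_mul_star_self
    (G.posSemidef_lapMatrix ℝ).isHermitian.eigenvectorUnitary) x y
  simpa [eigenvec, Matrix.mul_apply, Matrix.star_apply] using h

theorem eigenval_nonneg (i : V) : 0 ≤ eigenval G d i :=
  mul_nonneg (by positivity) ((G.posSemidef_lapMatrix ℝ).eigenvalues_nonneg i)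

theorem laplacian_eigenvec (hreg : G.IsRegularOfDegree d) (hd : d ≠ 0) (i : V) :
    laplacian G (eigenvec G i) = eigenval G d i • eigenvec G i := by
  rw [laplacian_eq_lapMatrix_mulVec hreg hd, eigenvec, Matrix.IsHermitian.mulVec_eigenvectorBasis,
    smul_smul, eigenval]

theorem eigenvec_eq_of_eigenval_eq_zero (hc : G.Connected) (hd : d ≠ 0) {i : V}
    (hi : eigenval G d i = 0) (x y : V) : eigenvec G i x = eigenvec G i y := by
  have hzero := (mul_eq_zero.1 hi).resolve_left (inv_ne_zero (Nat.cast_ne_zero.2 hd))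
  refine G.lapMatrix_mulVec_eq_zero_iff_forall_reachable.1 ?_ x y (hc x y)
  rw [eigenvec, Matrix.IsHermitian.mulVec_eigenvectorBasis, hzero, zero_smul]

theorem sum_eigenvec_eq_zero (hreg : G.IsRegularOfDegree d) (hd : d ≠ 0) {i : V}
    (hi : eigenval G d i ≠ 0) : ∑ x, eigenvec G i x = 0 := by
  have h := sum_laplacian hreg hd (eigenvec G i)
  simp only [laplacian_eigenvec hreg hd, Pi.smul_apply, ← Finset.smul_sum] at h
  exact (smul_eq_zero.1 h).resolve_left hi

theorem sum_ite_eigenval_eq_zero (hc : G.Connected) (hreg : G.IsRegularOfDegree d) (hd : d ≠ 0)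
    (x y : V) :
    ∑ i, (if eigenval G d i = 0 then eigenvec G i x * eigenvec G i y else 0) =
      1 / (Fintype.card V : ℝ) := by
  have : Nonempty V := hc.nonempty
  have hcard : (Fintype.card V : ℝ) ≠ 0 := Nat.cast_ne_zero.2 Fintype.card_ne_zero
  have hmode (i : V) : ∑ z, eigenvec G i x * eigenvec G i z = Fintype.card V *
      if eigenval G d i = 0 then eigenvec G i x * eigenvec G i y else 0 := by
    split_ifs with hi
    · simp [eigenvec_eq_of_eigenval_eq_zero hc hd hi _ y]
    · simp [← Finset.mul_sum, sum_eigenvec_eq_zero hreg hd hi]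
  rw [eq_div_iff hcard, mul_comm, Finset.mul_sum, ← Finset.sum_congr rfl fun i _ ↦ hmode i,
    Finset.sum_comm]
  simp [sum_eigenvec_mul_eigenvec, Matrix.one_apply]

theorem transP_mulVec (hreg : G.IsRegularOfDegree d) (f : V → ℝ) :
    (transP G d).mulVec f = f - laplacian G f := by
  funext x
  simp [laplacian_apply, hreg x, transP, Matrix.mulVec, dotProduct, Finset.mul_sum,
    ← Finset.sum_filter, SimpleGraph.neighborFinset_eq_filter]

theorem transP_pow_apply (hreg : G.IsRegularOfDegree d) (hd : d ≠ 0) (k : ℕ) (x y : V) :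
    (transP G d ^ k) x y =
      ∑ i, (1 - eigenval G d i) ^ k * (eigenvec G i x * eigenvec G i y) := by
  induction k generalizing x with
  | zero => simp [sum_eigenvec_mul_eigenvec]
  | succ k ih =>
    have hstep (i : V) : ∑ z, transP G d x z * eigenvec G i z =
        (1 - eigenval G d i) * eigenvec G i x := by
      have := congrFun (transP_mulVec hreg (eigenvec G i)) x
      rwa [laplacian_eigenvec hreg hd, Pi.sub_apply, Pi.smul_apply, smul_eq_mul,
        ← one_sub_mul] at this
    simp only [pow_succ', Matrix.mul_apply, ih, Finset.mul_sum]
    rw [Finset.sum_comm]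
    refine Finset.sum_congr rfl fun i _ ↦ ?_
    rw [mul_assoc, mul_left_comm, ← mul_assoc (1 - _), ← hstep, Finset.sum_mul, Finset.mul_sum]
    exact Finset.sum_congr rfl fun z _ ↦ by ring

theorem heatK_eq_sum (hreg : G.IsRegularOfDegree d) (hd : d ≠ 0) (t : ℝ) (x y : V) :
    heatK G d t x y =
      ∑ i, Real.exp (-eigenval G d i * t) * (eigenvec G i x * eigenvec G i y) := by
  have hmode (i : V) : HasSum (fun k : ℕ ↦ Real.exp (-t) * t ^ k / k.factorial *
      ((1 - eigenval G d i) ^ k * (eigenvec G i x * eigenvec G i y)))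
      (Real.exp (-eigenval G d i * t) * (eigenvec G i x * eigenvec G i y)) := by
    have hexp := NormedSpace.expSeries_div_hasSum_exp (t * (1 - eigenval G d i))
    rw [← Real.exp_eq_exp_ℝ] at hexp
    have hexponent : -eigenval G d i * t = -t + t * (1 - eigenval G d i) := by ring
    rw [hexponent, Real.exp_add, mul_right_comm]
    convert! hexp.mul_left (Real.exp (-t) * (eigenvec G i x * eigenvec G i y)) using 2 with k
    rw [mul_pow]
    ring
  simp only [heatK, transP_pow_apply hreg hd, Finset.mul_sum]
  exact (hasSum_sum fun i _ ↦ hmode i).tsum_eq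

theorem heatK_sub_eq_sum (hc : G.Connected) (hreg : G.IsRegularOfDegree d) (hd : d ≠ 0) (t : ℝ)
    (x y : V) :
    heatK G d t x y - 1 / (Fintype.card V : ℝ) =
      ∑ i, (if eigenval G d i = 0 then 0 else Real.exp (-eigenval G d i * t)) *
        (eigenvec G i x * eigenvec G i y) := by
  rw [heatK_eq_sum hreg hd, ← sum_ite_eigenval_eq_zero hc hreg hd x y, ← Finset.sum_sub_distrib]
  refine Finset.sum_congr rfl fun i _ ↦ ?_
  split_ifs with hi <;> simp [hi]

-- For a zero mode the coefficient `0⁻¹ = 0` is the integral of its vanishing contribution.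
theorem zGreen_eq_sum (hc : G.Connected) (hreg : G.IsRegularOfDegree d) (hd : d ≠ 0) (x y : V) :
    zGreen G d (Fintype.card V) x y =
      ∑ i, (eigenval G d i)⁻¹ * (eigenvec G i x * eigenvec G i y) := by
  have hpos {i : V} (hi : eigenval G d i ≠ 0) : -eigenval G d i < 0 :=
    neg_lt_zero.2 ((eigenval_nonneg i).lt_of_ne' hi)
  simp only [zGreen, heatK_sub_eq_sum hc hreg hd]
  rw [integral_finsetSum]
  · refine Finset.sum_congr rfl fun i _ ↦ ?_
    rw [integral_mul_const]
    split_ifs with hi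
    · simp [hi]
    · rw [integral_exp_mul_Ioi (hpos hi)]
      simp
  · intro i _
    refine Integrable.mul_const ?_ _
    split_ifs with hi
    · exact integrable_zero _ _ _
    · exact integrableOn_exp_mul_Ioi (hpos hi) 0

theorem isGreenKernel_zGreen (hc : G.Connected) (hreg : G.IsRegularOfDegree d) (hd : d ≠ 0) :
    IsGreenKernel G (zGreen G d (Fintype.card V)) (1 / Fintype.card V) := by
  intro x
  have hexpand : zGreen G d (Fintype.card V) x =
      ∑ i, ((eigenval G d i)⁻¹ * eigenvec G i x) • eigenvec G i := by
    funext y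
    simp [zGreen_eq_sum hc hreg hd, mul_assoc]
  funext y
  have hdelta : (Pi.single x 1 : V → ℝ) y = (1 : Matrix V V ℝ) x y := by
    rw [Matrix.one_eq_pi_single]
  rw [hexpand, map_sum, Pi.sub_apply, Function.const_apply, hdelta,
    ← sum_eigenvec_mul_eigenvec (G := G), ← sum_ite_eigenval_eq_zero hc hreg hd x y,
    ← Finset.sum_sub_distrib, Finset.sum_apply]
  refine Finset.sum_congr rfl fun i _ ↦ ?_
  rw [map_smul, laplacian_eigenvec hreg hd]
  simp only [Pi.smul_apply, smul_eq_mul]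
  split_ifs with hi
  · simp [hi]
  · field_simp
    ring

end Spectral

section Paths

variable {I : Type*}

/-- The path seen from time one onwards. -/
def shift (ω : ℕ → I) : ℕ → I := fun k ↦ ω (k + 1)

theorem stopAt_eq_of_first {A : Set I} {ω : ℕ → I} {k : ℕ} (hk : ω k ∈ A)
    (hmin : ∀ i < k, ω i ∉ A) : stopAt A ω = ω k := by
  have hhit : hitTime A ω = k := by
    refine le_antisymm (sInf_le ⟨k, hk, rfl⟩) (le_sInf ?_)
    rintro _ ⟨j, hj, rfl⟩
    exact Nat.cast_le.2 (not_lt.1 fun hlt ↦ hmin j hlt hj)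
  rw [stopAt, hhit, ENat.toNat_natCast]

theorem stopAt_eq_of_never {A : Set I} {ω : ℕ → I} (h : ∀ k, ω k ∉ A) : stopAt A ω = ω 0 := by
  have hhit : hitTime A ω = ⊤ := by simp [hitTime, h]
  rw [stopAt, hhit, ENat.toNat_top]

theorem exists_first {A : Set I} {ω : ℕ → I} (h : ∃ k, ω k ∈ A) :
    ∃ k, ω k ∈ A ∧ ∀ i < k, ω i ∉ A :=
  ⟨Nat.find h, Nat.find_spec h, fun _ ↦ Nat.find_min h⟩

theorem stopAt_shift {A : Set I} {ω : ℕ → I} (h0 : ω 0 ∉ A) (h : ∃ k, ω k ∈ A) :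
    stopAt A (shift ω) = stopAt A ω := by
  obtain ⟨k, hk, hmin⟩ := exists_first h
  obtain _ | k := k
  · exact absurd hk h0
  · rw [stopAt_eq_of_first hk hmin,
      stopAt_eq_of_first (ω := shift ω) hk fun i hi ↦ hmin (i + 1) (by omega)]
    rfl

theorem forall_shift_mem_iff {S : Set I} {ω : ℕ → I} (h0 : ω 0 ∈ S) :
    (∀ k, shift ω k ∈ S) ↔ ∀ k, ω k ∈ S :=
  ⟨fun h k ↦ k.casesOn h0 h, fun h k ↦ h (k + 1)⟩

variable [MeasurableSpace I]

theorem measurable_shift : Measurable (shift : (ℕ → I) → ℕ → I) :=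
  measurable_pi_lambda _ fun k ↦ measurable_pi_apply (k + 1)

theorem measurableSet_cylinder [MeasurableSingletonClass I] (k : ℕ) (p : ℕ → I) :
    MeasurableSet {ω : ℕ → I | ∀ i ≤ k, ω i = p i} := by
  simp only [ofPred_forall]
  exact .iInter fun i ↦ .iInter fun _ ↦ measurable_pi_apply i (measurableSet_singleton _)

variable [Countable I] [MeasurableSingletonClass I]

theorem measure_ext_of_cylinders {μ ν : Measure (ℕ → I)} [IsFiniteMeasure μ]
    (h : ∀ (k : ℕ) (p : ℕ → I), μ {ω | ∀ i ≤ k, ω i = p i} = ν {ω | ∀ i ≤ k, ω i = p i}) :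
    μ = ν := by
  have hμ : IsProjectiveLimit μ fun s ↦ μ.map s.restrict := fun _ ↦ rfl
  have hfamily : IsProjectiveMeasureFamily fun s : Finset ℕ ↦ μ.map s.restrict :=
    isProjectiveMeasureFamily_map_restrict fun _ ↦ (measurable_pi_apply _).aemeasurable
  refine hμ.unique ((isProjectiveLimit_nat_iff hfamily ν).2 fun n ↦ ?_)
  refine Measure.ext_of_singleton fun p ↦ ?_
  have hcyl : Preorder.frestrictLe (π := fun _ ↦ I) n ⁻¹' {p} =
      {ω : ℕ → I | ∀ i ≤ n, ω i = p ⟨min i n, Finset.mem_Iic.2 (min_le_right i n)⟩} := by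
    ext ω
    simp +contextual [funext_iff, Preorder.frestrictLe]
  change ν.map (Preorder.frestrictLe n) {p} = μ.map (Preorder.frestrictLe n) {p}
  rw [Measure.map_apply (by fun_prop) (measurableSet_singleton p),
    Measure.map_apply (by fun_prop) (measurableSet_singleton p), hcyl, h]

theorem measurable_hitTime (A : Set I) : Measurable (hitTime A) := by
  have hhit : hitTime A = fun ω ↦ ⨅ k : ℕ, if ω k ∈ A then (k : ℕ∞) else ⊤ := by
    funext ω
    simp only [hitTime, sInf_image, mem_ofPred_eq, iInf_eq_if]
  have : BorelSpace ℕ∞ := ⟨borel_eq_top_of_countable.symm⟩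
  rw [hhit]
  exact .iInf fun k ↦ .ite (measurable_pi_apply k A.to_countable.measurableSet)
    measurable_const measurable_const

theorem measurable_stopAt (A : Set I) : Measurable (stopAt A) := by
  have heval : Measurable fun q : (ℕ → I) × ℕ ↦ q.1 q.2 :=
    measurable_from_prod_countable_left measurable_pi_apply
  exact heval.comp
    (measurable_id.prodMk ((Measurable.of_discrete (f := ENat.toNat)).comp (measurable_hitTime A)))

end Paths

namespace IsSRW

variable {I : Type*} [MeasurableSpace I] {G : SimpleGraph I} {d : ℕ} {W : I → Measure (ℕ → I)}

theorem isProbabilityMeasure (hW : IsSRW G d W) (y : I) : IsProbabilityMeasure (W y) := hW.1 y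

theorem measure_start (hW : IsSRW G d W) (x y : I) :
    W x {ω | ω 0 = y} = if y = x then 1 else 0 := by
  simpa using hW.2 x 0 fun _ ↦ y

-- If `x` and `y` were inseparable, a measurable hull of the `W x`-null event that the path starts
-- at `y` would be unchanged by moving the starting point from `y` to `x`.
theorem measurableSingletonClass [Countable I] (hW : IsSRW G d W) :
    MeasurableSingletonClass I := by
  have : MeasurableSpace.SeparatesPoints I := by
    refine ⟨fun y x hinsep ↦ by_contra fun hne ↦ ?_⟩
    let A := toMeasurable (W x) {ω | ω 0 = y}
    have hA : W x A = 0 := by rw [measure_toMeasurable, hW.measure_start, if_neg hne]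
    have hsub : {ω | ω 0 = x} ⊆ A := by
      intro ω hω
      have hmem := hinsep ((fun v ↦ Function.update ω 0 v) ⁻¹' A)
        (measurable_update ω (measurableSet_toMeasurable _ _))
        (subset_toMeasurable _ _ (by simp))
      rwa [← hω, mem_preimage, Function.update_eq_self] at hmem
    have := measure_mono_null hsub hA
    simp [hW.measure_start] at this
  infer_instance

section Markov

variable [Countable I]

theorem ae_start (hW : IsSRW G d W) (y : I) : ∀ᵐ ω ∂W y, ω 0 = y := by
  have := hW.measurableSingletonClass
  have := hW.isProbabilityMeasure y
  have hmeas : MeasurableSet {ω : ℕ → I | ω 0 = y} :=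
    measurable_pi_apply (X := fun _ ↦ I) 0 (measurableSet_singleton y)
  exact (prob_compl_eq_zero_iff hmeas).2 (by rw [hW.measure_start, if_pos rfl])

variable [G.LocallyFinite]

theorem map_shift (hW : IsSRW G d W) (y : I) :
    (W y).map shift = ∑ v ∈ G.neighborFinset y, (d : ℝ≥0∞)⁻¹ • W v := by
  have := hW.measurableSingletonClass
  have := hW.isProbabilityMeasure y
  refine measure_ext_of_cylinders fun k p ↦ ?_
  have hcons : shift ⁻¹' {ω | ∀ i ≤ k, ω i = p i} =ᵐ[W y]
      {ω | ∀ i ≤ k + 1, ω i = (Nat.casesOn i y p : I)} := by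
    filter_upwards [hW.ae_start y] with ω hω
    exact propext ⟨fun h i ↦ i.casesOn (fun _ ↦ hω) fun i hi ↦ h i (by omega),
      fun h i hi ↦ h (i + 1) (by omega)⟩
  rw [Measure.map_apply measurable_shift (measurableSet_cylinder k p), measure_congr hcons, hW.2 y]
  simp [Finset.prod_range_succ', hW.2, srwStep, mul_comm]

theorem ae_shift (hW : IsSRW G d W) {y : I} {p : (ℕ → I) → Prop}
    (h : ∀ v, G.Adj y v → ∀ᵐ ω ∂W v, p ω) : ∀ᵐ ω ∂W y, p (shift ω) := by
  refine ae_of_ae_map measurable_shift.aemeasurable ?_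
  rw [hW.map_shift, ae_finsetSum_measure_iff]
  exact fun v hv ↦ Measure.ae_smul_measure (h v ((G.mem_neighborFinset y v).1 hv)) _

theorem ae_adj (hW : IsSRW G d W) (k : ℕ) (y : I) : ∀ᵐ ω ∂W y, G.Adj (ω k) (ω (k + 1)) := by
  induction k generalizing y with
  | zero =>
    have hnext := hW.ae_shift (p := fun ω ↦ G.Adj y (ω 0)) fun v (hv : G.Adj y v) ↦ by
      filter_upwards [hW.ae_start v] with ω hω
      rwa [hω]
    filter_upwards [hnext, hW.ae_start y] with ω hadj hω
    rwa [hω]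
  | succ k ih => exact hW.ae_shift fun v _ ↦ ih v

theorem ae_stopAt_compl_mem (hW : IsSRW G d W) (S : Set I) (y : I) :
    ∀ᵐ ω ∂W y, stopAt Sᶜ ω ∈ insert y (⋃ v ∈ S, G.neighborSet v) := by
  filter_upwards [ae_all_iff.2 fun k ↦ hW.ae_adj k y, hW.ae_start y] with ω hadj hω
  by_cases hex : ∃ k, ω k ∈ Sᶜ
  · obtain ⟨k, hk, hmin⟩ := exists_first hex
    rw [stopAt_eq_of_first hk hmin]
    obtain _ | k := k
    · exact .inl hω
    · exact .inr (mem_biUnion (notMem_compl_iff.1 (hmin k k.lt_succ_self)) (hadj k))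
  · rw [stopAt_eq_of_never (not_exists.1 hex), hω]
    exact mem_insert _ _

theorem integrable_stopAt_compl (hW : IsSRW G d W) {S : Set I} (hS : S.Finite) (f : I → ℝ)
    (y : I) : Integrable (fun ω ↦ f (stopAt Sᶜ ω)) (W y) := by
  have := hW.measurableSingletonClass
  have := hW.isProbabilityMeasure y
  have hD : (insert y (⋃ v ∈ S, G.neighborSet v)).Finite :=
    (hS.biUnion fun v _ ↦ (G.neighborSet v).toFinite).insert y
  obtain ⟨C, hC⟩ := (hD.image fun v ↦ ‖f v‖).bddAbove
  refine .of_bound ((measurable_of_countable f).comp (measurable_stopAt _)).aestronglyMeasurable C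
    ?_
  filter_upwards [hW.ae_stopAt_compl_mem S y] with ω hω
  exact hC (mem_image_of_mem _ hω)

theorem laplacian_integral_eq_zero (hW : IsSRW G d W) (hreg : G.IsRegularOfDegree d) (hd : d ≠ 0)
    {F : (ℕ → I) → ℝ} (hF : Measurable F) (hint : ∀ v, Integrable F (W v)) {y : I}
    (hshift : ∀ᵐ ω ∂W y, F (shift ω) = F ω) :
    laplacian G (fun v ↦ ∫ ω, F ω ∂W v) y = 0 := by
  have hd' : (d : ℝ≥0∞)⁻¹ ≠ ∞ := ENNReal.inv_ne_top.2 (Nat.cast_ne_zero.2 hd)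
  rw [laplacian_apply, ← integral_congr_ae hshift,
    ← integral_map measurable_shift.aemeasurable hF.aestronglyMeasurable, hW.map_shift,
    integral_finsetSum_measure fun v _ ↦ (hint v).smul_measure hd', hreg y]
  simp [integral_smul_measure, Finset.mul_sum]

theorem ae_exists_notMem (hW : IsSRW G d W) (hreg : G.IsRegularOfDegree d) (hd : d ≠ 0)
    (hc : G.Connected) {S : Set I} (hS : S.Finite) (hSu : S ≠ univ) (y : I) :
    ∀ᵐ ω ∂W y, ∃ k, ω k ∉ S := by
  have := hW.measurableSingletonClass
  have := hW.isProbabilityMeasure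
  let stay : Set (ℕ → I) := {ω | ∀ k, ω k ∈ S}
  have hstay : MeasurableSet stay := by
    simp only [stay, ofPred_forall]
    exact .iInter fun k ↦ measurable_pi_apply k S.to_countable.measurableSet
  let F : (ℕ → I) → ℝ := stay.indicator 1
  have hint (v : I) : Integrable F (W v) := (integrable_const 1).indicator hstay
  have hF0 : (fun v ↦ ∫ ω, F ω ∂W v) = 0 := by
    refine eq_zero_of_laplacian_eq_zero hc hS hSu (fun v hv ↦ ?_) fun v hv ↦ ?_
    · refine integral_eq_zero_of_ae ?_
      filter_upwards [hW.ae_start v] with ω hω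
      exact indicator_of_notMem (s := stay) (fun hmem ↦ hv (hω ▸ hmem 0)) _
    · refine hW.laplacian_integral_eq_zero hreg hd (measurable_one.indicator hstay) hint ?_
      filter_upwards [hW.ae_start v] with ω hω
      simp only [stay, indicator_apply, mem_ofPred_eq, forall_shift_mem_iff (hω ▸ hv),
        Pi.one_apply]
  have hzero : (W y).real stay = 0 := by
    simpa [F, integral_indicator_one hstay] using congrFun hF0 y
  rw [ae_iff]
  simpa [stay] using (measureReal_eq_zero_iff).1 hzero

end Markov

end IsSRW

section HarmonicExtension

variable {I : Type*} [MeasurableSpace I] [Countable I] {G : SimpleGraph I} {d : ℕ}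
  {W : I → Measure (ℕ → I)}

/-- The harmonic extension to `S` of the values of `f` outside `S`: the mean value of `f` at the
exit of the walk from `S`. -/
noncomputable def harmExt (W : I → Measure (ℕ → I)) (S : Set I) (f : I → ℝ) (y : I) : ℝ :=
  ∫ p, f (stopAt Sᶜ p) ∂W y

theorem harmExt_of_notMem (hW : IsSRW G d W) {S : Set I} {y : I} (hy : y ∉ S) (f : I → ℝ) :
    harmExt W S f y = f y := by
  have := hW.isProbabilityMeasure y
  have hstopAt : (fun p ↦ f (stopAt Sᶜ p)) =ᵐ[W y] fun _ ↦ f y := by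
    filter_upwards [hW.ae_start y] with p hp
    rw [stopAt_eq_of_first (k := 0) (by rwa [hp]) (by simp), hp]
  simp [harmExt, integral_congr_ae hstopAt]

theorem laplacian_harmExt [G.LocallyFinite] (hW : IsSRW G d W) (hreg : G.IsRegularOfDegree d)
    (hd : d ≠ 0) (hc : G.Connected) {S : Set I} (hS : S.Finite) (hSu : S ≠ univ) (f : I → ℝ)
    {y : I} (hy : y ∈ S) : laplacian G (harmExt W S f) y = 0 := by
  have := hW.measurableSingletonClass
  refine hW.laplacian_integral_eq_zero hreg hd
    ((measurable_of_countable f).comp (measurable_stopAt _))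
    (hW.integrable_stopAt_compl hS f) ?_
  filter_upwards [hW.ae_start y, hW.ae_exists_notMem hreg hd hc hS hSu y] with ω hω hexit
  exact congrArg f (stopAt_shift (notMem_compl_iff.2 (hω ▸ hy)) hexit)

end HarmonicExtension

section Gaussian

variable {I I' ι : Type*} {K : I → I → ℝ} {K' : I' → I' → ℝ} {μ : Measure (I → ℝ)}
  {μ' : Measure (I' → ℝ)}

/-- The bilinear form with matrix `K`: the covariance of two finite linear combinations of a
Gaussian field with covariance `K`. -/
noncomputable def covForm (K : I → I → ℝ) : (I →₀ ℝ) →ₗ[ℝ] (I →₀ ℝ) →ₗ[ℝ] ℝ :=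
  Finsupp.linearCombination ℝ fun i ↦ Finsupp.linearCombination ℝ (K i)

theorem covForm_apply (a b : I →₀ ℝ) :
    covForm K a b =
      Finsupp.linearCombination ℝ (fun i ↦ Finsupp.linearCombination ℝ (K i) b) a := by
  simp [covForm, Finsupp.linearCombination_apply, Finsupp.sum]

theorem measurable_linearCombination (c : I →₀ ℝ) :
    Measurable fun ω : I → ℝ ↦ Finsupp.linearCombination ℝ ω c := by
  simp only [Finsupp.linearCombination_apply, Finsupp.sum]
  fun_prop

theorem IsGaussianField.map_linearCombination (hμ : IsGaussianField μ K) (c : I →₀ ℝ) :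
    μ.map (fun ω ↦ Finsupp.linearCombination ℝ ω c) =
      gaussianReal 0 (covForm K c c).toNNReal := by
  simpa [covForm_apply, Finsupp.linearCombination_apply, Finsupp.sum, Finset.mul_sum, mul_assoc]
    using hμ.2 c

theorem map_dual_map_pi_linearCombination [Fintype ι] (μ : Measure (I → ℝ)) (a : ι → I →₀ ℝ)
    (L : StrongDual ℝ (ι → ℝ)) :
    (μ.map fun ω i ↦ Finsupp.linearCombination ℝ ω (a i)).map L =
      μ.map fun ω ↦ Finsupp.linearCombination ℝ ω (∑ i, L (Pi.single i 1) • a i) := by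
  rw [Measure.map_map (by fun_prop)
    (measurable_pi_lambda _ fun i ↦ measurable_linearCombination (a i))]
  congr 1
  funext ω
  rw [Function.comp_apply, pi_eq_sum_univ' (fun i ↦ Finsupp.linearCombination ℝ ω (a i))]
  simp [mul_comm]

theorem IsGaussianField.map_pi_linearCombination_eq [Finite ι] (hμ : IsGaussianField μ K)
    (hμ' : IsGaussianField μ' K') (a : ι → I →₀ ℝ) (a' : ι → I' →₀ ℝ)
    (h : ∀ i j, covForm K (a i) (a j) = covForm K' (a' i) (a' j)) :
    μ.map (fun ω i ↦ Finsupp.linearCombination ℝ ω (a i)) =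
      μ'.map (fun ω i ↦ Finsupp.linearCombination ℝ ω (a' i)) := by
  cases nonempty_fintype ι
  have := hμ.1
  have := hμ'.1
  refine Measure.ext_of_charFunDual (funext fun L ↦ ?_)
  rw [charFunDual_eq_charFun_map_one, charFunDual_eq_charFun_map_one,
    map_dual_map_pi_linearCombination, map_dual_map_pi_linearCombination,
    hμ.map_linearCombination, hμ'.map_linearCombination]
  simp [h]

variable {G : SimpleGraph I} [G.LocallyFinite] {κ : ℝ}

/-- The coefficients of the linear functional `f ↦ laplacian G f x`. -/
noncomputable def laplacianCoeff (G : SimpleGraph I) [G.LocallyFinite] (x : I) : I →₀ ℝ :=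
  Finsupp.single x 1 - (G.degree x : ℝ)⁻¹ • ∑ y ∈ G.neighborFinset x, Finsupp.single y 1

theorem linearCombination_laplacianCoeff (f : I → ℝ) (x : I) :
    Finsupp.linearCombination ℝ f (laplacianCoeff G x) = laplacian G f x := by
  simp [laplacianCoeff, laplacian_apply]

theorem IsGreenKernel.covForm_laplacianCoeff (hK : IsGreenKernel G K κ) {x : I}
    (hx : G.degree x ≠ 0) (y : I) :
    covForm K (laplacianCoeff G x) (laplacianCoeff G y) = laplacian G (Pi.single y 1) x := by
  have hrow : (fun i ↦ laplacian G (K i) y) = Pi.single y 1 - Function.const I κ := by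
    funext i
    simp [hK i, Pi.single_apply, eq_comm]
  simp only [covForm_apply, linearCombination_laplacianCoeff]
  rw [hrow, map_sub, Pi.sub_apply, laplacian_const hx, sub_zero]

end Gaussian

section Coupling

theorem ae_condDistrib_id_eq {X E : Type*} [MeasurableSpace X] [MeasurableSpace E]
    [StandardBorelSpace X] [Nonempty X] [MeasurableEq E] {μ : Measure X} [IsFiniteMeasure μ]
    {f : X → E} (hf : Measurable f) :
    ∀ᵐ e ∂(μ.map f), ∀ᵐ x ∂(condDistrib id f μ e), f x = e := by
  have hmeas : MeasurableSet {z : E × X | f z.2 = z.1} :=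
    measurableSet_eq_fun (hf.comp measurable_snd) measurable_fst
  refine Measure.ae_ae_of_ae_compProd (p := fun z : E × X ↦ f z.2 = z.1) ?_
  rw [compProd_map_condDistrib aemeasurable_id, ae_map_iff (by fun_prop) hmeas]
  simp

theorem exists_coupling_of_map_eq {X Y E : Type*} [MeasurableSpace X] [MeasurableSpace Y]
    [MeasurableSpace E] [StandardBorelSpace X] [Nonempty X] [StandardBorelSpace Y] [Nonempty Y]
    [MeasurableEq E] {μ : Measure X} {ν : Measure Y} [IsProbabilityMeasure μ]
    [IsProbabilityMeasure ν] {f : X → E} {g : Y → E} (hf : Measurable f) (hg : Measurable g)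
    (h : μ.map f = ν.map g) :
    ∃ Q : Measure (X × Y), Q.map Prod.fst = μ ∧ Q.map Prod.snd = ν ∧ ∀ᵐ q ∂Q, f q.1 = g q.2 := by
  have : IsProbabilityMeasure (μ.map f) := Measure.isProbabilityMeasure_map hf.aemeasurable
  refine ⟨(condDistrib id f μ ×ₖ condDistrib id g ν) ∘ₘ (μ.map f), ?_, ?_, ?_⟩
  · rw [Measure.map_comp _ _ measurable_fst, ← Kernel.fst_eq, Kernel.fst_prod,
      condDistrib_comp_map hf.aemeasurable aemeasurable_id, Measure.map_id]
  · rw [Measure.map_comp _ _ measurable_snd, ← Kernel.snd_eq, Kernel.snd_prod, h,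
      condDistrib_comp_map hg.aemeasurable aemeasurable_id, Measure.map_id]
  · have hfst : ∀ᵐ e ∂(μ.map f), ∀ᵐ x ∂(condDistrib id f μ e), f x = e :=
      ae_condDistrib_id_eq hf
    have hsnd : ∀ᵐ e ∂(μ.map f), ∀ᵐ y ∂(condDistrib id g ν e), g y = e :=
      h ▸ ae_condDistrib_id_eq hg
    refine Measure.ae_comp_of_ae_ae
      (measurableSet_eq_fun (hf.comp measurable_fst) (hg.comp measurable_snd)) ?_
    filter_upwards [hfst, hsnd] with e he_fst he_snd
    rw [Kernel.prod_apply]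
    filter_upwards [Measure.quasiMeasurePreserving_fst.ae he_fst,
      Measure.quasiMeasurePreserving_snd.ae he_snd] with q hq_fst hq_snd
    rw [hq_fst, hq_snd]

end Coupling

section Comparison

variable {V T : Type*} {G : SimpleGraph V} {Gt : SimpleGraph T} {ρ : V → T} {U B : Set V}

/-- Local isomorphism: `ρ` is injective on `B`, and `B` contains the neighbours of each `u ∈ U`,
which `ρ` maps onto the neighbours of `ρ u`. In the coupling, `B` is a union of balls of radius `R`
and `U` lies in the concentric balls of radius `R - 1`. -/
structure IsNbhdIsoOn (G : SimpleGraph V) (Gt : SimpleGraph T) (ρ : V → T) (U B : Set V) :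
    Prop where
  injOn : InjOn ρ B
  subset : U ⊆ B
  neighborSet_subset : ∀ u ∈ U, G.neighborSet u ⊆ B
  image_neighborSet : ∀ u ∈ U, ρ '' G.neighborSet u = Gt.neighborSet (ρ u)

namespace IsNbhdIsoOn

theorem ne_univ_of_image_ne_univ (h : IsNbhdIsoOn G Gt ρ U B) [Nonempty V] (hct : Gt.Connected)
    (hU : ρ '' U ≠ univ) : U ≠ univ := by
  rintro rfl
  refine hU (eq_univ_of_forall_adj_mem hct (univ_nonempty.image ρ) ?_)
  rintro _ ⟨u, hu, rfl⟩ w hw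
  have hw' : w ∈ ρ '' G.neighborSet u := (h.image_neighborSet u hu).symm ▸ hw
  exact image_mono (subset_univ _) hw'

variable [G.LocallyFinite] [Gt.LocallyFinite]

theorem laplacian_comp (h : IsNbhdIsoOn G Gt ρ U B) {u : V} (hu : u ∈ U) (f : T → ℝ) :
    laplacian G (f ∘ ρ) u = laplacian Gt f (ρ u) := by
  have hinj : InjOn ρ (G.neighborFinset u) := by
    simpa using h.injOn.mono (h.neighborSet_subset u hu)
  have himage : Gt.neighborFinset (ρ u) = (G.neighborFinset u).image ρ := by
    rw [← Finset.coe_inj]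
    simp [h.image_neighborSet u hu]
  rw [laplacian_apply, laplacian_apply, ← G.card_neighborFinset_eq_degree,
    ← Gt.card_neighborFinset_eq_degree, himage, Finset.card_image_of_injOn hinj,
    Finset.sum_image hinj]
  rfl

theorem laplacian_single (h : IsNbhdIsoOn G Gt ρ U B) {u v : V} (hu : u ∈ U) (hv : v ∈ B) :
    laplacian Gt (Pi.single (ρ v) 1) (ρ u) = laplacian G (Pi.single v 1) u := by
  have hsingle {w : V} (hw : w ∈ B) : (Pi.single (ρ v) 1 : T → ℝ) (ρ w) =
      (Pi.single v 1 : V → ℝ) w := by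
    simp [Pi.single_apply, h.injOn.eq_iff hw hv]
  rw [← h.laplacian_comp hu]
  exact laplacian_congr (hsingle (h.subset hu)) fun w hw ↦ hsingle (h.neighborSet_subset u hu hw)

variable [MeasurableSpace V] [MeasurableSpace T] {d : ℕ} {W : V → Measure (ℕ → V)}
  {Wt : T → Measure (ℕ → T)}

theorem sub_harmExt_eq [Countable V] [Countable T] (h : IsNbhdIsoOn G Gt ρ U B)
    (hc : G.Connected) (hct : Gt.Connected) (hreg : G.IsRegularOfDegree d)
    (hregt : Gt.IsRegularOfDegree d) (hd : d ≠ 0) (hW : IsSRW G d W) (hWt : IsSRW Gt d Wt)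
    (hU : U.Finite) (hρU : ρ '' U ≠ univ) {f : V → ℝ} {g : T → ℝ}
    (hfg : ∀ u ∈ U, laplacian G f u = laplacian Gt g (ρ u)) {y : V} (hy : y ∈ B) :
    f y - harmExt W U f y = g (ρ y) - harmExt Wt (ρ '' U) g (ρ y) := by
  let e : V → ℝ := (f - harmExt W U f) - (g - harmExt Wt (ρ '' U) g) ∘ ρ
  have := hc.nonempty
  have hUu : U ≠ univ := h.ne_univ_of_image_ne_univ hct hρU
  have he : B.indicator e = 0 := by
    refine eq_zero_of_laplacian_eq_zero hc hU hUu (fun v hv ↦ ?_) fun u hu ↦ ?_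
    · refine indicator_apply_eq_zero.2 fun hvB ↦ ?_
      have hρv : ρ v ∉ ρ '' U := (h.injOn.mem_image_iff h.subset hvB).not.2 hv
      simp [e, harmExt_of_notMem hW hv, harmExt_of_notMem hWt hρv]
    · rw [laplacian_congr (indicator_of_mem (h.subset hu) e) fun w hw ↦
        indicator_of_mem (h.neighborSet_subset u hu hw) e]
      simp only [e, map_sub, Pi.sub_apply, h.laplacian_comp hu]
      rw [laplacian_harmExt hW hreg hd hc hU hUu f hu,
        laplacian_harmExt hWt hregt hd hct (hU.image ρ) hρU g (mem_image_of_mem ρ hu), hfg u hu]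
      ring
  have hey : e y = 0 := by rw [← indicator_of_mem hy e, he, Pi.zero_apply]
  exact sub_eq_zero.1 hey

theorem exists_coupling {K : V → V → ℝ} {Kt : T → T → ℝ} {κ κt : ℝ} {μ : Measure (V → ℝ)}
    {μt : Measure (T → ℝ)} (h : IsNbhdIsoOn G Gt ρ U B) (hc : G.Connected)
    (hct : Gt.Connected) (hreg : G.IsRegularOfDegree d) (hregt : Gt.IsRegularOfDegree d)
    (hd : d ≠ 0) (hK : IsGreenKernel G K κ) (hKt : IsGreenKernel Gt Kt κt)
    (hμ : IsGaussianField μ K) (hμt : IsGaussianField μt Kt) (hW : IsSRW G d W)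
    (hWt : IsSRW Gt d Wt) (hU : U.Finite) (hρU : ρ '' U ≠ univ) :
    ∃ Q : Measure ((V → ℝ) × (T → ℝ)), Q.map Prod.fst = μ ∧ Q.map Prod.snd = μt ∧
      ∀ᵐ q ∂Q, ∀ y ∈ B, q.1 y - harmExt W U q.1 y =
        q.2 (ρ y) - harmExt Wt (ρ '' U) q.2 (ρ y) := by
  have := countable_of_connected hc
  have := countable_of_connected hct
  have := hμ.1
  have := hμt.1
  have := hU.to_subtype
  have hcov (u v : U) : covForm K (laplacianCoeff G u) (laplacianCoeff G v) =
      covForm Kt (laplacianCoeff Gt (ρ u)) (laplacianCoeff Gt (ρ v)) := by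
    rw [hK.covForm_laplacianCoeff (by rwa [hreg u]), hKt.covForm_laplacianCoeff (by rwa [hregt _]),
      h.laplacian_single u.2 (h.subset v.2)]
  obtain ⟨Q, hfst, hsnd, hQ⟩ := exists_coupling_of_map_eq
    (measurable_pi_lambda _ fun u : U ↦ measurable_linearCombination (laplacianCoeff G u))
    (measurable_pi_lambda _ fun u : U ↦ measurable_linearCombination (laplacianCoeff Gt (ρ u)))
    (hμ.map_pi_linearCombination_eq hμt _ _ hcov)
  refine ⟨Q, hfst, hsnd, ?_⟩
  filter_upwards [hQ] with q hq y hy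
  refine h.sub_harmExt_eq hc hct hreg hregt hd hW hWt hU hρU (fun u hu ↦ ?_) hy
  simpa only [linearCombination_laplacianCoeff] using congrFun hq ⟨u, hu⟩

end IsNbhdIsoOn

end Comparison

section Covering

variable {V T : Type*} {G : SimpleGraph V} {Gt : SimpleGraph T} {π : T → V}

theorem mem_gball_of_adj (hc : G.Connected) {x u v : V} {r : ℕ} (hu : u ∈ gball G x r)
    (huv : G.Adj u v) : v ∈ gball G x (r + 1) := by
  have hdist : G.dist x u ≤ r := hu
  have htri := hc.dist_triangle (u := x) (v := u) (w := v)
  rw [SimpleGraph.dist_eq_one_iff_adj.2 huv] at htri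
  exact htri.trans (by omega)

theorem exists_dist_le_of_walk (hct : Gt.Connected)
    (hπ : ∀ y, π '' Gt.neighborSet y = G.neighborSet (π y)) {u v : V} (p : G.Walk u v) {z : T}
    (hz : π z = u) : ∃ w, π w = v ∧ Gt.dist z w ≤ p.length := by
  induction p generalizing z with
  | nil => exact ⟨z, hz, by simp⟩
  | cons hadj p ih =>
    rw [← SimpleGraph.mem_neighborSet, ← hz, ← hπ z] at hadj
    obtain ⟨z₁, hz₁, rfl⟩ := hadj
    obtain ⟨w, rfl, hw⟩ := ih rfl
    have htri := hct.dist_triangle (u := z) (v := z₁) (w := w)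
    rw [SimpleGraph.dist_eq_one_iff_adj.2 hz₁] at htri
    exact ⟨w, rfl, by rw [SimpleGraph.Walk.length_cons]; omega⟩

theorem gball_subset_image_gball (hc : G.Connected) (hct : Gt.Connected)
    (hπ : ∀ y, π '' Gt.neighborSet y = G.neighborSet (π y)) (z : T) (r : ℕ) :
    gball G (π z) r ⊆ π '' gball Gt z r := by
  intro v hv
  obtain ⟨p, hp⟩ := hc.exists_walk_length_eq_dist (π z) v
  obtain ⟨w, hw, hdist⟩ := exists_dist_le_of_walk hct hπ p rfl
  exact ⟨w, hdist.trans (hp.trans_le hv), hw⟩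

theorem isNbhdIsoOn_biUnion_gball (hc : G.Connected) (hct : Gt.Connected)
    (hπ : ∀ y, π '' Gt.neighborSet y = G.neighborSet (π y)) {Z : Set T} {r : ℕ} {ρ : V → T}
    (hρ : LeftInvOn ρ π (⋃ z ∈ Z, gball Gt z (r + 1))) {U : Set V}
    (hU : U ⊆ ⋃ z ∈ Z, gball G (π z) r) :
    IsNbhdIsoOn G Gt ρ U (⋃ z ∈ Z, gball G (π z) (r + 1)) where
  injOn := by
    refine hρ.rightInvOn_image.injOn.mono ?_
    rw [image_iUnion₂]
    exact iUnion₂_mono fun z _ ↦ gball_subset_image_gball hc hct hπ z (r + 1)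
  subset := hU.trans (iUnion₂_mono fun z _ v hv ↦ Nat.le_succ_of_le hv)
  neighborSet_subset u hu v huv := by
    obtain ⟨z, hz, huz⟩ := mem_iUnion₂.1 (hU hu)
    exact mem_iUnion₂.2 ⟨z, hz, mem_gball_of_adj hc huz huv⟩
  image_neighborSet u hu := by
    obtain ⟨z, hz, huz⟩ := mem_iUnion₂.1 (hU hu)
    obtain ⟨y, hy, rfl⟩ := gball_subset_image_gball hc hct hπ z r huz
    have hinv : LeftInvOn ρ π (gball Gt z (r + 1)) := fun w hw ↦ hρ (mem_biUnion hz hw)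
    have hnbr : Gt.neighborSet y ⊆ gball Gt z (r + 1) := fun w hw ↦ mem_gball_of_adj hct hy hw
    rw [hinv (Nat.le_succ_of_le hy), ← hπ y, (hinv.mono hnbr).image_image]

end Covering

end GFF

theorem gff_exact_local_coupling_general {d : ℕ} (hd : 3 ≤ d)
    {V : Type*} [Fintype V] [MeasurableSpace V] {G : SimpleGraph V} (hconn : G.Connected)
    (hreg : GFF.IsReg G d)
    {T : Type*} [MeasurableSpace T] {Gt : SimpleGraph T} (htree : GFF.IsRegTree Gt d)
    {μG : Measure (V → ℝ)} (hμG : GFF.IsGaussianField μG (GFF.zGreen G d (Fintype.card V)))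
    {μT : Measure (T → ℝ)} (hμT : GFF.IsGaussianField μT (GFF.treeGreen Gt d))
    {Wg : V → Measure (ℕ → V)} (hWg : GFF.IsSRW G d Wg)
    {Wt : T → Measure (ℕ → T)} (hWt : GFF.IsSRW Gt d Wt)
    {π : T → V} (hπ : ∀ y, π '' Gt.neighborSet y = G.neighborSet (π y)) {Z : Set T} {r : ℕ}
    {ρ : V → T} (hρ : LeftInvOn ρ π (⋃ z ∈ Z, GFF.gball Gt z (r + 1)))
    {U : Set V} (hU : U ⊆ ⋃ z ∈ Z, GFF.gball G (π z) r) :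
    ∃ Q : Measure ((V → ℝ) × (T → ℝ)), Q.map Prod.fst = μG ∧ Q.map Prod.snd = μT ∧
      ∀ᵐ q ∂Q, ∀ y ∈ ⋃ z ∈ Z, GFF.gball G (π z) (r + 1),
        q.1 y - ∫ p, q.1 (GFF.stopAt Uᶜ p) ∂Wg y =
          q.2 (ρ y) - ∫ p, q.2 (GFF.stopAt (ρ '' U)ᶜ p) ∂Wt (ρ y) := by
  have hd0 : d ≠ 0 := by omega
  have : Gt.LocallyFinite := fun v ↦ (htree.2.2.finite_neighborSet hd0 v).fintype
  have hregG : G.IsRegularOfDegree d := hreg.isRegularOfDegree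
  have hregT : Gt.IsRegularOfDegree d := htree.2.2.isRegularOfDegree
  have htreeT : Gt.IsTree := ⟨htree.1, htree.2.1⟩
  have : Infinite T := GFF.infinite_of_isTree htreeT hregT (by omega)
  have hρU : ρ '' U ≠ univ := fun h ↦ infinite_univ (h ▸ U.toFinite.image ρ)
  exact (GFF.isNbhdIsoOn_biUnion_gball hconn htree.1 hπ hρ hU).exists_coupling hconn htree.1
    hregG hregT hd0 (GFF.isGreenKernel_zGreen hconn hregG hd0)
    (GFF.isGreenKernel_treeGreen htreeT hregT hd) hμG hμT hWg hWt U.toFinite hρU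

/-- exact coupling of the zero-average GFF and the tree GFF modulo harmonic
extensions, on (unions of) tree-like balls. -/
theorem gff_exact_local_coupling
    (d : ℕ) (hd : 3 ≤ d)
    (V : Type) [Fintype V] [MeasurableSpace V]
    (G : SimpleGraph V) (hconn : G.Connected) (hreg : GFF.IsReg G d)
    (T : Type) [MeasurableSpace T]
    (Gt : SimpleGraph T) (o : T) (htree : GFF.IsRegTree Gt d)
    (μG : Measure (V → ℝ)) (hμG : GFF.IsGaussianField μG (GFF.zGreen G d (Fintype.card V)))
    (μT : Measure (T → ℝ)) (hμT : GFF.IsGaussianField μT (GFF.treeGreen Gt d))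
    (Wg : V → Measure (ℕ → V)) (hWg : GFF.IsSRW G d Wg)
    (Wt : T → Measure (ℕ → T)) (hWt : GFF.IsSRW Gt d Wt) :
    (∀ (x x' : V) (π : T → V), GFF.IsCoverMap Gt G o x π →
      ∀ R : ℕ, 1 ≤ R →
      GFF.TxZero G (GFF.gball G x R) → GFF.TxZero G (GFF.gball G x' R) →
      GFF.gball G x R ∩ GFF.gball G x' R = ∅ →
      ∀ z' : T, π z' = x' →
      ∀ ρ : V → T,
        (∀ z ∈ GFF.gball Gt o R ∪ GFF.gball Gt z' R, ρ (π z) = z) →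
        (∀ v ∈ GFF.gball G x R ∪ GFF.gball G x' R,
          π (ρ v) = v ∧ ρ v ∈ GFF.gball Gt o R ∪ GFF.gball Gt z' R) →
      ∀ U : Set V, U ⊆ GFF.gball G x (R - 1) ∪ GFF.gball G x' (R - 1) →
      ∃ Q : Measure ((V → ℝ) × (T → ℝ)),
        Q.map Prod.fst = μG ∧ Q.map Prod.snd = μT ∧
        ∀ᵐ q ∂Q, ∀ y ∈ GFF.gball G x R ∪ GFF.gball G x' R,
          q.1 y - ∫ p, q.1 (GFF.stopAt Uᶜ p) ∂ Wg y =
            q.2 (ρ y) - ∫ p, q.2 (GFF.stopAt (ρ '' U)ᶜ p) ∂ Wt (ρ y)) ∧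
    (∀ (x : V) (π : T → V), GFF.IsCoverMap Gt G o x π →
      ∀ R : ℕ, 1 ≤ R → GFF.TxZero G (GFF.gball G x R) →
      ∀ ρ : V → T,
        (∀ z ∈ GFF.gball Gt o R, ρ (π z) = z) →
        (∀ v ∈ GFF.gball G x R, π (ρ v) = v ∧ ρ v ∈ GFF.gball Gt o R) →
      ∀ U : Set V, U ⊆ GFF.gball G x (R - 1) →
      ∃ Q : Measure ((V → ℝ) × (T → ℝ)),
        Q.map Prod.fst = μG ∧ Q.map Prod.snd = μT ∧
        ∀ᵐ q ∂Q, ∀ y ∈ GFF.gball G x R,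
          q.1 y - ∫ p, q.1 (GFF.stopAt Uᶜ p) ∂ Wg y =
            q.2 (ρ y) - ∫ p, q.2 (GFF.stopAt (ρ '' U)ᶜ p) ∂ Wt (ρ y)) := by
  refine ⟨fun x x' π hcov R hR _ _ _ z' hz' ρ hρ _ U hU ↦ ?_, fun x π hcov R hR _ ρ hρ _ U hU ↦ ?_⟩
  · obtain ⟨rfl, _, hπ⟩ := hcov
    obtain ⟨r, rfl⟩ := Nat.exists_eq_add_of_le' hR
    subst hz'
    simpa only [biUnion_pair] using gff_exact_local_coupling_general hd hconn hreg htree hμG hμT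
      hWg hWt hπ (Z := {o, z'}) (by rwa [biUnion_pair]) (by rwa [biUnion_pair])
  · obtain ⟨rfl, _, hπ⟩ := hcov
    obtain ⟨r, rfl⟩ := Nat.exists_eq_add_of_le' hR
    simpa only [biUnion_singleton] using gff_exact_local_coupling_general hd hconn hreg htree hμG
      hμT hWg hWt hπ (Z := {o}) (by rwa [biUnion_singleton]) (by rwa [biUnion_singleton])
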